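/- arXiv:2602.08927 — 2 statements merged into one kernel-verified Lean document; each statement's English description precedes it below -/
import Mathlib

section
/- In the setting of the histogram-compression lemma: let f̃ ∈ D_{a,b} be a constrained Grenander estimator based on (x_1,…,x_n), V := log(b/a), and k ≥ 1. The compressed histogram h constructed by grouping bins of f̃ into maximal blocks on which the log-heights vary by at most V/k, assigning to each block its leftmost height, and renormalizing by a factor α so that h integrates to 1, satisfies | log f̃(x) − log h(x) | ≤ 2V/k for every x ∈ [0,1]; in particular the normalizer satisfies |log α| ≤ V/k. -/
/-!
On a block, the heights of `ftil` lie between `exp (-V/k) * W` and `W`, where `W` is the leftmost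
height of the block: the weights decrease, and their logarithms vary by at most `V/k`
(`histogram_eq` identifies the height of `ftil` at a point). Integrating over all blocks compares
the total mass `S` of the unnormalized compressed histogram with `∫ ftil = 1` and gives
`exp (-V/k) * S ≤ 1 ≤ S`. Since `α * S = 1`, this is `-V/k ≤ log α ≤ 0`. The pointwise bound is then
the triangle inequality, with `V/k` lost in replacing a height by `W` and `V/k` in normalizing.
-/

open MeasureTheory ProbabilityTheory Real Set Filter

noncomputable section

/-- `f` is a non-increasing probability density on `[0,1]`
(behavior pinned on `[0,1)`, as histograms use the convention `1{t_{j-1} ≤ x < t_j}`). -/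
def IsMonoDensity (f : ℝ → ℝ) : Prop :=
  (∀ u ∈ Set.Ico (0:ℝ) 1, 0 ≤ f u) ∧
  (∀ u ∈ Set.Ico (0:ℝ) 1, ∀ v ∈ Set.Ico (0:ℝ) 1, u ≤ v → f v ≤ f u) ∧
  (∫ u in (0:ℝ)..1, f u) = 1

/-- The class `D_{a,b}` of non-increasing densities bounded between `a` and `b`. -/
def IsMonoDensityAB (a b : ℝ) (f : ℝ → ℝ) : Prop :=
  IsMonoDensity f ∧ ∀ u ∈ Set.Ico (0:ℝ) 1, a ≤ f u ∧ f u ≤ b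

/-- The cell of the partition `s p, s (p + 1), …, s q` that contains `u`. -/
lemma exists_cell (s : ℕ → ℝ) (u : ℝ) {p q : ℕ} (hpq : p ≤ q) (hp : s p ≤ u) (hq : u < s q) :
    ∃ j, p ≤ j ∧ j < q ∧ s j ≤ u ∧ u < s (j + 1) := by
  induction q, hpq using Nat.le_induction with
  | base => exact absurd hq (not_lt.mpr hp)
  | succ q hpq ih =>
    by_cases hu : u < s q
    · obtain ⟨j, h1, h2, h3⟩ := ih hu
      exact ⟨j, h1, by omega, h3⟩
    · exact ⟨q, hpq, by omega, not_lt.mp hu, hq⟩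

lemma breakpoints_le {m : ℕ} {t : ℕ → ℝ} (htmono : ∀ i < m, t i < t (i + 1))
    {p q : ℕ} (hpq : p ≤ q) (hq : q ≤ m) : t p ≤ t q := by
  induction q, hpq using Nat.le_induction with
  | base => exact le_rfl
  | succ q hpq ih => exact (ih (by omega)).trans (htmono q (by omega)).le

lemma weights_le {m : ℕ} {w : ℕ → ℝ} (hwmono : ∀ i, 1 ≤ i → i + 1 ≤ m → w (i + 1) ≤ w i)
    {p q : ℕ} (hp : 1 ≤ p) (hpq : p ≤ q) (hq : q ≤ m) : w q ≤ w p := by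
  induction q, hpq using Nat.le_induction with
  | base => exact le_rfl
  | succ q hpq ih => exact (hwmono q (by omega) hq).trans (ih (by omega))

/-- The bins are disjoint, so only one summand of a histogram is nonzero at a given point. -/
lemma histogram_eq {m : ℕ} {w t : ℕ → ℝ} (htmono : ∀ i < m, t i < t (i + 1))
    {j : ℕ} (hj : j < m) {u : ℝ} (h1 : t j ≤ u) (h2 : u < t (j + 1)) :
    (∑ i ∈ Finset.range m, if t i ≤ u ∧ u < t (i + 1) then w (i + 1) else 0) = w (j + 1) := by
  rw [Finset.sum_eq_single_of_mem j (Finset.mem_range.mpr hj), if_pos ⟨h1, h2⟩]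
  intro i hi hij
  rw [Finset.mem_range] at hi
  rw [if_neg]
  rintro ⟨h3, h4⟩
  rcases lt_or_gt_of_ne hij with hlt | hlt
  · linarith [breakpoints_le htmono (show i + 1 ≤ j by omega) hj.le]
  · linarith [breakpoints_le htmono (show j + 1 ≤ i by omega) hi.le]

/-- pointwise accuracy of the compressed histogram.
Let `ftil ∈ D_{a,b}` be a constrained Grenander estimator based on `x_1, …, x_n`,
represented as a monotone histogram with weights `b ≥ w_1 ≥ … ≥ w_m ≥ a` and breakpoints
`0 = t_0 < … < t_m = 1`. Let `V = log(b/a)`, `k ≥ 1`. Group bins into maximal blocks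
`i'_0 = 0 < i'_1 < … < i'_L = m`, where `i'_ℓ = max{j > i'_{ℓ-1} : log w_{i'_{ℓ-1}+1} - log w_j ≤ V/k}`,
give the `ℓ`-th block the height `α · w_{i'_{ℓ-1}+1}`, with `α > 0` the normalizer making
the result `h` integrate to `1`. Then `|log ftil x - log h x| ≤ 2V/k` on `[0,1)`, and
`|log α| ≤ V/k`. -/
theorem stmt_6 (n : ℕ) (hn : 1 ≤ n) (a b : ℝ) (ha : 0 < a) (hab : a ≤ b)
    (x : ℕ → ℝ) (hx : ∀ i < n, x i ∈ Set.Icc (0:ℝ) 1)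
    (k : ℕ) (hk : 1 ≤ k)
    (ftil : ℝ → ℝ) (hftil : IsMonoDensityAB a b ftil)
    (hmax : ∀ f : ℝ → ℝ, IsMonoDensityAB a b f →
      ∑ i ∈ Finset.range n, Real.log (f (x i)) ≤ ∑ i ∈ Finset.range n, Real.log (ftil (x i)))
    -- histogram representation of `ftil`
    (m : ℕ) (hm : 1 ≤ m) (w t : ℕ → ℝ)
    (ht0 : t 0 = 0) (htm : t m = 1) (htmono : ∀ i < m, t i < t (i + 1))
    (hwmono : ∀ i, 1 ≤ i → i + 1 ≤ m → w (i + 1) ≤ w i)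
    (hwbound : ∀ i, 1 ≤ i → i ≤ m → a ≤ w i ∧ w i ≤ b)
    (hrep : ∀ u ∈ Set.Ico (0:ℝ) 1,
      ftil u = ∑ i ∈ Finset.range m, if t i ≤ u ∧ u < t (i + 1) then w (i + 1) else 0)
    -- the maximal-block structure
    (L : ℕ) (hL : 1 ≤ L) (i' : ℕ → ℕ) (hi'0 : i' 0 = 0) (hi'L : i' L = m)
    (hblock : ∀ ℓ < L,
      i' ℓ < i' (ℓ + 1) ∧ i' (ℓ + 1) ≤ m ∧
      (∀ j, i' ℓ < j → j ≤ i' (ℓ + 1) →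
        Real.log (w (i' ℓ + 1)) - Real.log (w j) ≤ Real.log (b / a) / k) ∧
      (i' (ℓ + 1) = m ∨
        Real.log (b / a) / k < Real.log (w (i' ℓ + 1)) - Real.log (w (i' (ℓ + 1) + 1))))
    -- the normalizer and the compressed histogram
    (α : ℝ) (hα : 0 < α)
    (hnorm : α * ∑ ℓ ∈ Finset.range L, w (i' ℓ + 1) * (t (i' (ℓ + 1)) - t (i' ℓ)) = 1)
    (h : ℝ → ℝ)
    (hh : ∀ ℓ < L, ∀ u : ℝ, t (i' ℓ) ≤ u → u < t (i' (ℓ + 1)) → h u = α * w (i' ℓ + 1)) :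
    (∀ u ∈ Set.Ico (0:ℝ) 1,
        |Real.log (ftil u) - Real.log (h u)| ≤ 2 * Real.log (b / a) / k) ∧
      |Real.log α| ≤ Real.log (b / a) / k := by
  set c := Real.log (b / a) / k with hc
  have hsucc : ∀ ℓ < L, t (i' ℓ) ≤ t (i' (ℓ + 1)) := fun ℓ hℓ =>
    breakpoints_le htmono (hblock ℓ hℓ).1.le (hblock ℓ hℓ).2.1
  have hwpos : ∀ ℓ < L, 0 < w (i' ℓ + 1) := fun ℓ hℓ =>
    ha.trans_le (hwbound _ (by omega) (by have := hblock ℓ hℓ; omega)).1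
  have hile : ∀ ℓ ≤ L, i' ℓ ≤ m := by
    intro ℓ hℓ
    rcases hℓ.lt_or_eq with h1 | h1
    · have := hblock ℓ h1; omega
    · rw [h1, hi'L]
  have hmem : ∀ ℓ < L, ∀ u, t (i' ℓ) ≤ u → u < t (i' (ℓ + 1)) → u ∈ Set.Ico (0:ℝ) 1 := by
    intro ℓ hℓ u h1 h2
    constructor
    · rw [← ht0]; exact (breakpoints_le htmono (Nat.zero_le _) (hile ℓ hℓ.le)).trans h1
    · rw [← htm]; exact h2.trans_le (breakpoints_le htmono (hblock ℓ hℓ).2.1 le_rfl)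
  have hpt : ∀ ℓ < L, ∀ u, t (i' ℓ) ≤ u → u < t (i' (ℓ + 1)) →
      0 < ftil u ∧ ftil u ≤ w (i' ℓ + 1) ∧ Real.log (w (i' ℓ + 1)) - Real.log (ftil u) ≤ c := by
    intro ℓ hℓ u h1 h2
    obtain ⟨hb1, hb2, hb3, -⟩ := hblock ℓ hℓ
    obtain ⟨j, hj1, hj2, hj3, hj4⟩ := exists_cell t u hb1.le h1 h2
    have hf : ftil u = w (j + 1) := by
      rw [hrep u (hmem ℓ hℓ u h1 h2), histogram_eq htmono (by omega) hj3 hj4]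
    rw [hf]
    exact ⟨ha.trans_le (hwbound _ (by omega) (by omega)).1,
      weights_le hwmono (by omega) (by omega) (by omega), hb3 _ (by omega) (by omega)⟩
  have hone : ∫ u in (0:ℝ)..1, ftil u = 1 := hftil.1.2.2
  -- The Bochner integral of a non-integrable function is `0`, so integral `1` yields integrability.
  have hint : IntervalIntegrable ftil volume 0 1 :=
    intervalIntegral.intervalIntegrable_of_integral_ne_zero (by rw [hone]; exact one_ne_zero)
  have hintb : ∀ ℓ < L, IntervalIntegrable ftil volume (t (i' ℓ)) (t (i' (ℓ + 1))) := by
    intro ℓ hℓ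
    refine hint.mono_set ?_
    rw [Set.uIcc_of_le (hsucc ℓ hℓ), Set.uIcc_of_le zero_le_one]
    refine Set.Icc_subset_Icc ?_ ?_
    · rw [← ht0]; exact breakpoints_le htmono (Nat.zero_le _) (hile ℓ hℓ.le)
    · rw [← htm]; exact breakpoints_le htmono (hblock ℓ hℓ).2.1 le_rfl
  have hsum : ∑ ℓ ∈ Finset.range L, ∫ u in t (i' ℓ)..t (i' (ℓ + 1)), ftil u = 1 := by
    rw [intervalIntegral.sum_integral_adjacent_intervals (a := fun ℓ => t (i' ℓ)) hintb]
    simp only [hi'0, hi'L, ht0, htm, hone]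
  set S := ∑ ℓ ∈ Finset.range L, w (i' ℓ + 1) * (t (i' (ℓ + 1)) - t (i' ℓ)) with hS
  have hS1 : 1 ≤ S := by
    rw [← hsum, hS]
    refine Finset.sum_le_sum fun ℓ hℓ => ?_
    rw [Finset.mem_range] at hℓ
    calc ∫ u in t (i' ℓ)..t (i' (ℓ + 1)), ftil u
        ≤ ∫ _ in t (i' ℓ)..t (i' (ℓ + 1)), w (i' ℓ + 1) :=
          intervalIntegral.integral_mono_on_of_le_Ioo (hsucc ℓ hℓ) (hintb ℓ hℓ)
            intervalIntegrable_const fun u hu => (hpt ℓ hℓ u hu.1.le hu.2).2.1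
      _ = _ := by rw [intervalIntegral.integral_const, smul_eq_mul, mul_comm]
  have hS2 : Real.exp (-c) * S ≤ 1 := by
    rw [← hsum, hS, Finset.mul_sum]
    refine Finset.sum_le_sum fun ℓ hℓ => ?_
    rw [Finset.mem_range] at hℓ
    calc Real.exp (-c) * (w (i' ℓ + 1) * (t (i' (ℓ + 1)) - t (i' ℓ)))
        = ∫ _ in t (i' ℓ)..t (i' (ℓ + 1)), Real.exp (-c) * w (i' ℓ + 1) := by
          rw [intervalIntegral.integral_const, smul_eq_mul]; ring
      _ ≤ _ := by
          refine intervalIntegral.integral_mono_on_of_le_Ioo (hsucc ℓ hℓ) intervalIntegrable_const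
            (hintb ℓ hℓ) fun u hu => ?_
          obtain ⟨h1, -, h3⟩ := hpt ℓ hℓ u hu.1.le hu.2
          have hW := hwpos ℓ hℓ
          rw [← Real.log_le_log_iff (by positivity) h1,
            Real.log_mul (Real.exp_ne_zero _) hW.ne', Real.log_exp]
          linarith
  have hSpos : 0 < S := by linarith
  have hlog : Real.log α = -Real.log S := by
    have := congrArg Real.log hnorm
    rw [Real.log_mul hα.ne' hSpos.ne', Real.log_one] at this
    linarith
  have hlogS0 : 0 ≤ Real.log S := Real.log_nonneg hS1
  have hlogSc : Real.log S ≤ c := by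
    have := Real.log_le_log (by positivity) hS2
    rw [Real.log_mul (Real.exp_ne_zero _) hSpos.ne', Real.log_exp, Real.log_one] at this
    linarith
  refine ⟨fun u hu => ?_, ?_⟩
  · obtain ⟨ℓ, -, hℓ, h1, h2⟩ := exists_cell (fun ℓ => t (i' ℓ)) u (Nat.zero_le L)
      (by simpa only [hi'0, ht0] using hu.1) (by simpa only [hi'L, htm] using hu.2)
    obtain ⟨hf, hle, hd⟩ := hpt ℓ hℓ u h1 h2
    have hle' := Real.log_le_log hf hle
    rw [hh ℓ hℓ u h1 h2, Real.log_mul hα.ne' (hwpos ℓ hℓ).ne', hlog, mul_div_assoc, ← hc, abs_le]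
    constructor <;> linarith
  · rw [hlog, abs_le]
    constructor <;> linarith
end
end

section
/- Fix n ∈ ℕ, a sample x_1,…,x_n ∈ (0,1), and 0 < a ≤ b < ∞. Let 0 = x_{(0)} < x_{(1)} < … < x_{(r_n)} < x_{(r_n+1)} = 1 denote the distinct order statistics of the sample (augmented by 0 and 1), with r_n ≤ n. Then a maximizer of Σ_{i=1}^n log f(x_i) over f ∈ D_{a,b} can be chosen to be a monotone histogram of the form f(u) = θ_j for u ∈ (x_{(j)}, x_{(j+1)}], j = 0,…,r_n, with b ≥ θ_0 ≥ θ_1 ≥ … ≥ θ_{r_n} ≥ a. Equivalently: for every f ∈ D_{a,b} there exists a piecewise-constant f̃ ∈ D_{a,b} with knots at the order statistics such that Σ_{i=1}^n log f̃(x_i) ≥ Σ_{i=1}^n log f(x_i). -/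
/-!
Replace `f` by its average over each cell `(x_(j), x_(j+1)]` cut out by the distinct sample points
together with `0` and `1`. Averaging preserves the total mass, the bounds `a ≤ f ≤ b` and
monotonicity. A sample point is the right endpoint of its cell, where a non-increasing `f` is
smallest, so the cell average is at least the value of `f` there, and each term of the
log-likelihood can only grow.

The cell of `u` is `(cellLeft S u, cellRight S u]`, where `S` is the finite set of sample points.
Preservation of mass (`integral_cellAvg`) is proved at every knot, by considering
the smallest knot where it would fail.
-/

open MeasureTheory ProbabilityTheory Real Set Filter

noncomputable section

/-- The largest among `0` and the points of `S` strictly below `u`. -/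
def cellLeft (S : Finset ℝ) (u : ℝ) : ℝ :=
  (insert 0 (S.filter (· < u))).max' (Finset.insert_nonempty _ _)

/-- The smallest among `1` and the points of `S` that are at least `u`. -/
def cellRight (S : Finset ℝ) (u : ℝ) : ℝ :=
  (insert 1 (S.filter (u ≤ ·))).min' (Finset.insert_nonempty _ _)

/-- The mean value of `f` over the cell `(cellLeft S u, cellRight S u]` belonging to `u`. -/
def cellAvg (S : Finset ℝ) (f : ℝ → ℝ) (u : ℝ) : ℝ :=
  (∫ t in (cellLeft S u)..(cellRight S u), f t) / (cellRight S u - cellLeft S u)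

lemma cellLeft_cases (S : Finset ℝ) (u : ℝ) :
    cellLeft S u = 0 ∨ (cellLeft S u ∈ S ∧ cellLeft S u < u) := by
  have h := Finset.max'_mem (insert 0 (S.filter (· < u))) (Finset.insert_nonempty _ _)
  rw [Finset.mem_insert, Finset.mem_filter] at h
  exact h

lemma cellRight_cases (S : Finset ℝ) (u : ℝ) :
    cellRight S u = 1 ∨ (cellRight S u ∈ S ∧ u ≤ cellRight S u) := by
  have h := Finset.min'_mem (insert 1 (S.filter (u ≤ ·))) (Finset.insert_nonempty _ _)
  rw [Finset.mem_insert, Finset.mem_filter] at h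
  exact h

lemma cellLeft_nonneg (S : Finset ℝ) (u : ℝ) : 0 ≤ cellLeft S u :=
  Finset.le_max' _ _ (Finset.mem_insert_self _ _)

lemma cellRight_le_one (S : Finset ℝ) (u : ℝ) : cellRight S u ≤ 1 :=
  Finset.min'_le _ _ (Finset.mem_insert_self _ _)

lemma le_cellLeft {S : Finset ℝ} {s u : ℝ} (hs : s ∈ S) (hsu : s < u) : s ≤ cellLeft S u :=
  Finset.le_max' _ _ (Finset.mem_insert_of_mem (Finset.mem_filter.2 ⟨hs, hsu⟩))

lemma cellRight_le {S : Finset ℝ} {s u : ℝ} (hs : s ∈ S) (hsu : u ≤ s) : cellRight S u ≤ s :=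
  Finset.min'_le _ _ (Finset.mem_insert_of_mem (Finset.mem_filter.2 ⟨hs, hsu⟩))

lemma cellLeft_lt_cellRight {S : Finset ℝ} (hS : ∀ s ∈ S, s ∈ Ioo (0:ℝ) 1) (u : ℝ) :
    cellLeft S u < cellRight S u := by
  rcases cellLeft_cases S u with hl | ⟨hl, hlu⟩ <;>
    rcases cellRight_cases S u with hr | ⟨hr, hru⟩
  · rw [hl, hr]; exact zero_lt_one
  · rw [hl]; exact (hS _ hr).1
  · rw [hr]; exact (hS _ hl).2
  · exact hlu.trans_le hru

lemma cellAvg_congr {S : Finset ℝ} (f : ℝ → ℝ) {u v : ℝ} (huv : u ≤ v)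
    (h : ∀ s ∈ S, ¬(u ≤ s ∧ s < v)) : cellAvg S f u = cellAvg S f v := by
  have h1 : S.filter (· < u) = S.filter (· < v) :=
    Finset.filter_congr fun s hs => ⟨fun hu => hu.trans_le huv, fun hv =>
      not_le.1 fun hu => h s hs ⟨hu, hv⟩⟩
  have h2 : S.filter (u ≤ ·) = S.filter (v ≤ ·) :=
    Finset.filter_congr fun s hs => ⟨fun hu => not_lt.1 fun hv => h s hs ⟨hu, hv⟩,
      fun hv => huv.trans hv⟩
  simp only [cellAvg, cellLeft, cellRight, h1, h2]

lemma integrable_cell {S : Finset ℝ} (hS : ∀ s ∈ S, s ∈ Ioo (0:ℝ) 1) {f : ℝ → ℝ}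
    (hf : IntervalIntegrable f volume 0 1) (u : ℝ) :
    IntervalIntegrable f volume (cellLeft S u) (cellRight S u) := by
  refine hf.mono_set ?_
  rw [uIcc_of_le (cellLeft_lt_cellRight hS u).le, uIcc_of_le zero_le_one]
  exact Icc_subset_Icc (cellLeft_nonneg S u) (cellRight_le_one S u)

lemma le_cellAvg {S : Finset ℝ} (hS : ∀ s ∈ S, s ∈ Ioo (0:ℝ) 1) {f : ℝ → ℝ}
    (hf : IntervalIntegrable f volume 0 1) (u c : ℝ)
    (h : ∀ t ∈ Ioo (cellLeft S u) (cellRight S u), c ≤ f t) : c ≤ cellAvg S f u := by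
  have hlt := cellLeft_lt_cellRight hS u
  have := intervalIntegral.integral_mono_on_of_le_Ioo hlt.le
    (intervalIntegrable_const (c := c)) (integrable_cell hS hf u) h
  rw [intervalIntegral.integral_const, smul_eq_mul] at this
  rw [cellAvg, le_div_iff₀ (sub_pos.2 hlt)]
  linarith

lemma cellAvg_le {S : Finset ℝ} (hS : ∀ s ∈ S, s ∈ Ioo (0:ℝ) 1) {f : ℝ → ℝ}
    (hf : IntervalIntegrable f volume 0 1) (u c : ℝ)
    (h : ∀ t ∈ Ioo (cellLeft S u) (cellRight S u), f t ≤ c) : cellAvg S f u ≤ c := by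
  have hlt := cellLeft_lt_cellRight hS u
  have := intervalIntegral.integral_mono_on_of_le_Ioo hlt.le
    (integrable_cell hS hf u) (intervalIntegrable_const (c := c)) h
  rw [intervalIntegral.integral_const, smul_eq_mul] at this
  rw [cellAvg, div_le_iff₀ (sub_pos.2 hlt)]
  linarith

/-- Averaging over cells preserves the mass of `[0, p]` for every knot `p`. Integrability of the
average is carried along, since gluing the integrals at the previous knot needs it. -/
lemma integral_cellAvg {S : Finset ℝ} (hS : ∀ s ∈ S, s ∈ Ioo (0:ℝ) 1) {f : ℝ → ℝ}
    (hf : IntervalIntegrable f volume 0 1) :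
    ∀ p ∈ insert 0 (insert 1 S), IntervalIntegrable (cellAvg S f) volume 0 p ∧
      ∫ t in (0:ℝ)..p, cellAvg S f t = ∫ t in (0:ℝ)..p, f t := by
  classical
  by_contra! hcon
  -- Below, `p` is the smallest knot at which the claim fails.
  obtain ⟨q, hq, hqn⟩ := hcon
  set B := (insert 0 (insert 1 S)).filter fun p => ¬(IntervalIntegrable (cellAvg S f) volume 0 p ∧
      ∫ t in (0:ℝ)..p, cellAvg S f t = ∫ t in (0:ℝ)..p, f t) with hB
  have hBne : B.Nonempty := ⟨q, Finset.mem_filter.2 ⟨hq, fun h => hqn h.1 h.2⟩⟩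
  obtain ⟨hp, hpn⟩ := Finset.mem_filter.1 (B.min'_mem hBne)
  set p := B.min' hBne with hpdef
  apply hpn
  rcases Finset.mem_insert.1 hp with hp0 | hp1
  · rw [hp0]; simp
  have hp01 : 0 < p ∧ p ≤ 1 := by
    rcases Finset.mem_insert.1 hp1 with h | h
    · rw [h]; norm_num
    · exact ⟨(hS p h).1, (hS p h).2.le⟩
  have hR : cellRight S p = p := by
    rcases Finset.mem_insert.1 hp1 with h | h
    · rcases cellRight_cases S p with h' | ⟨h', hle⟩
      · rw [h', h]
      · exact absurd (hS _ h').2 (by rw [h] at hle ⊢; exact hle.not_gt)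
    · refine le_antisymm (cellRight_le h le_rfl) ?_
      rcases cellRight_cases S p with h' | ⟨-, h'⟩
      · rw [h']; exact hp01.2
      · exact h'
  have hlt : cellLeft S p < p := by
    have := cellLeft_lt_cellRight hS p
    rwa [hR] at this
  -- The left endpoint of the cell of `p` is an earlier knot, so the claim holds there.
  obtain ⟨hi, he⟩ : IntervalIntegrable (cellAvg S f) volume 0 (cellLeft S p) ∧
      ∫ t in (0:ℝ)..(cellLeft S p), cellAvg S f t = ∫ t in (0:ℝ)..(cellLeft S p), f t := by
    by_contra hnot
    have hmem : cellLeft S p ∈ insert 0 (insert 1 S) := by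
      rcases cellLeft_cases S p with h | ⟨h, -⟩
      · rw [h]; exact Finset.mem_insert_self _ _
      · exact Finset.mem_insert_of_mem (Finset.mem_insert_of_mem h)
    exact (B.min'_le _ (Finset.mem_filter.2 ⟨hmem, hnot⟩)).not_gt hlt
  have hconst : EqOn (fun _ => cellAvg S f p) (cellAvg S f) (uIoc (cellLeft S p) p) := by
    intro t ht
    rw [uIoc_of_le hlt.le] at ht
    exact (cellAvg_congr f ht.2 fun s hs h => ((le_cellLeft hs h.2).trans_lt ht.1).not_ge h.1).symm
  have hi2 : IntervalIntegrable (cellAvg S f) volume (cellLeft S p) p :=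
    (intervalIntegrable_const (c := cellAvg S f p)).congr hconst
  have he2 : ∫ t in (cellLeft S p)..p, cellAvg S f t = ∫ t in (cellLeft S p)..p, f t := by
    rw [← intervalIntegral.integral_congr_ae (.of_forall hconst), intervalIntegral.integral_const,
      smul_eq_mul, cellAvg, hR, mul_div_cancel₀ _ (sub_pos.2 hlt).ne']
  have hfi2 : IntervalIntegrable f volume (cellLeft S p) p := by
    have := integrable_cell hS hf p
    rwa [hR] at this
  have hfi : IntervalIntegrable f volume 0 (cellLeft S p) := by
    refine hf.mono_set ?_
    rw [uIcc_of_le (cellLeft_nonneg S p), uIcc_of_le zero_le_one]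
    exact Icc_subset_Icc le_rfl (hlt.le.trans hp01.2)
  refine ⟨hi.trans hi2, ?_⟩
  rw [← intervalIntegral.integral_add_adjacent_intervals hi hi2,
    ← intervalIntegral.integral_add_adjacent_intervals hfi hfi2, he, he2]

/-- histogram form of the constrained Grenander estimator.
Fix a sample `x_1, …, x_n ∈ (0,1)` and `0 < a ≤ b`. For every `f ∈ D_{a,b}` there is a
`ftil ∈ D_{a,b}` that is piecewise constant with knots at the (distinct) order statistics
of the sample — i.e. `ftil` is constant on every interval `(u, v] ⊆ (0,1]` containing no
sample point in `[u, v)` — whose log-likelihood is at least that of `f`. In particular a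
maximizer of the log-likelihood over `D_{a,b}` can be chosen to be such a monotone
histogram (with heights automatically in `[b, a]`-range and non-increasing, since
`ftil ∈ D_{a,b}`). -/
theorem stmt_11 (n : ℕ) (a b : ℝ) (ha : 0 < a) (hab : a ≤ b)
    (x : ℕ → ℝ) (hx : ∀ i < n, x i ∈ Set.Ioo (0:ℝ) 1) :
    ∀ f : ℝ → ℝ, IsMonoDensityAB a b f →
      ∃ ftil : ℝ → ℝ, IsMonoDensityAB a b ftil ∧
        (∀ u v : ℝ, 0 < u → u ≤ v → v ≤ 1 →
          (∀ i < n, ¬(u ≤ x i ∧ x i < v)) → ftil u = ftil v) ∧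
        ∑ i ∈ Finset.range n, Real.log (f (x i)) ≤
          ∑ i ∈ Finset.range n, Real.log (ftil (x i)) := by
  classical
  rintro f ⟨⟨-, hmono, hint⟩, hbd⟩
  -- A non-integrable `f` would have integral `0`, not `1`.
  have hf : IntervalIntegrable f volume 0 1 := by
    by_contra h
    rw [intervalIntegral.integral_undef h] at hint
    exact zero_ne_one hint
  set S : Finset ℝ := (Finset.range n).image x with hSdef
  have hS : ∀ s ∈ S, s ∈ Ioo (0:ℝ) 1 := by
    intro s hs
    obtain ⟨i, hi, rfl⟩ := Finset.mem_image.1 hs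
    exact hx i (Finset.mem_range.1 hi)
  have hcell : ∀ u, ∀ t ∈ Ioo (cellLeft S u) (cellRight S u), t ∈ Ico (0:ℝ) 1 := fun u t ht =>
    ⟨(cellLeft_nonneg S u).trans ht.1.le, ht.2.trans_le (cellRight_le_one S u)⟩
  have hlow : ∀ u, a ≤ cellAvg S f u := fun u =>
    le_cellAvg hS hf u a fun t ht => (hbd t (hcell u t ht)).1
  -- The cell of `u` ends at or before any sample point `s ≥ u`, and `f` is non-increasing.
  have hge : ∀ u, ∀ s ∈ S, u ≤ s → f s ≤ cellAvg S f u := fun u s hs hus =>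
    le_cellAvg hS hf u _ fun t ht => hmono t (hcell u t ht) s (Ioo_subset_Ico_self (hS s hs))
      (ht.2.le.trans (cellRight_le hs hus))
  refine ⟨cellAvg S f, ⟨⟨fun u _ => ha.le.trans (hlow u), ?_, ?_⟩, fun u _ => ⟨hlow u, ?_⟩⟩,
    ?_, ?_⟩
  · intro u _ v _ huv
    by_cases h : ∃ s ∈ S, u ≤ s ∧ s < v
    · obtain ⟨s, hs, hus, hsv⟩ := h
      refine (cellAvg_le hS hf v (f s) fun t ht => ?_).trans (hge u s hs hus)
      exact hmono s (Ioo_subset_Ico_self (hS s hs)) t (hcell v t ht)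
        ((le_cellLeft hs hsv).trans ht.1.le)
    · push Not at h
      exact (cellAvg_congr f huv fun s hs h' => (h s hs h'.1).not_gt h'.2).ge
  · rw [(integral_cellAvg hS hf 1 (by simp)).2, hint]
  · exact cellAvg_le hS hf u b fun t ht => (hbd t (hcell u t ht)).2
  · intro u v _ huv _ h
    refine cellAvg_congr f huv fun s hs => ?_
    obtain ⟨i, hi, rfl⟩ := Finset.mem_image.1 hs
    exact h i (Finset.mem_range.1 hi)
  · refine Finset.sum_le_sum fun i hi => ?_
    have hxi := Ioo_subset_Ico_self (hx i (Finset.mem_range.1 hi))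
    exact Real.log_le_log (ha.trans_le (hbd _ hxi).1)
      (hge (x i) (x i) (Finset.mem_image_of_mem x hi) le_rfl)
end
end
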